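/- Let m ≥ 0 with (m+2)γ > 1. Then for all t ≥ 1, R_m(t) ≤ C_m h(t) Q_m(t) with C_m = (2m+3)γ((m+2)γ - 1)^{-1}, where R_m(t) = ∫ₜ^∞ s^{-2} P_m(s) ds, P_m(t) = ∫₁^∞ s^{-γ} h(max(t,s)) h(s)^m ds, Q_m(t) = ∫₁^∞ s^{-γ}(max(t,s))^{-1} h(s)^m ds, and h(t) = ∫₁^∞ s^{-γ}(max(t,s))^{-1} ds. -/

import Mathlib

open MeasureTheory Real

noncomputable def h0 (γ t : ℝ) : ℝ := ∫ s in (1:ℝ)..t, s ^ (-γ)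

noncomputable def hfun (γ t : ℝ) : ℝ := ∫ s in Set.Ioi (1:ℝ), s ^ (-γ) * (max t s)⁻¹

noncomputable def Nfun (γ : ℝ) (m : ℕ) (t : ℝ) : ℝ := ∫ s in (1:ℝ)..t, s ^ (-γ) * (hfun γ s) ^ m

noncomputable def Qfun (γ : ℝ) (m : ℕ) (t : ℝ) : ℝ :=
  ∫ s in Set.Ioi (1:ℝ), s ^ (-γ) * (max t s)⁻¹ * (hfun γ s) ^ m

noncomputable def Pfun (γ : ℝ) (m : ℕ) (t : ℝ) : ℝ :=
  ∫ s in Set.Ioi (1:ℝ), s ^ (-γ) * hfun γ (max t s) * (hfun γ s) ^ m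

noncomputable def Rfun (γ : ℝ) (m : ℕ) (t : ℝ) : ℝ :=
  ∫ s in Set.Ioi t, s ^ (-2 : ℝ) * Pfun γ m s


lemma aux_h0_deriv (γ s : ℝ) (hs : 0 < s) : HasDerivAt (h0 γ) (s ^ (-γ)) s := by
  unfold h0
  have hc : ContinuousOn (fun u : ℝ => u ^ (-γ)) (Set.Ioi 0) := by
    intro x hx
    exact (continuousAt_rpow_const x (-γ) (Or.inl (ne_of_gt hx))).continuousWithinAt
  apply intervalIntegral.integral_hasDerivAt_right
  · apply ContinuousOn.intervalIntegrable
    apply hc.mono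
    intro x hx
    rcases Set.mem_uIcc.1 hx with h | h
    · exact lt_of_lt_of_le one_pos h.1
    · exact lt_of_lt_of_le hs h.1
  · exact hc.stronglyMeasurableAtFilter isOpen_Ioi s hs
  · exact hc.continuousAt (Ioi_mem_nhds hs)

lemma aux_h0_eq (γ s : ℝ) (hs : 1 ≤ s) : (1 - γ) * h0 γ s = s ^ (1 - γ) - 1 := by
  unfold h0
  by_cases h : γ = 1
  · subst h; simp
  · have h' : 1 - γ ≠ 0 := fun h1 => h (by linarith)
    rw [integral_rpow]
    · have : -γ + 1 = 1 - γ := by ring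
      rw [this, one_rpow]; field_simp
    · right
      refine ⟨fun h1 => h (by linarith), ?_⟩
      rw [Set.uIcc_of_le hs]
      intro h0
      linarith [h0.1]

lemma aux_h0_nonneg (γ s : ℝ) (hs : 1 ≤ s) : 0 ≤ h0 γ s := by
  unfold h0
  apply intervalIntegral.integral_nonneg hs
  intro u hu
  exact rpow_nonneg (by linarith [hu.1]) _

noncomputable def gfun (γ s : ℝ) : ℝ := s⁻¹ * h0 γ s + s ^ (-γ) / γ

lemma aux_h0_g (γ s : ℝ) (hγ : 0 < γ) (hs : 1 ≤ s) : h0 γ s = γ * s * gfun γ s - 1 := by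
  have h := aux_h0_eq γ s hs
  have hs0 : 0 < s := by linarith
  have e : s ^ (1 - γ) = s * s ^ (-γ) := by
    rw [sub_eq_add_neg, rpow_add hs0, rpow_one]
  rw [e] at h
  unfold gfun
  field_simp
  linarith

lemma aux_g_deriv (γ s : ℝ) (hγ : 0 < γ) (hs : 0 < s) :
    HasDerivAt (gfun γ) (-(h0 γ s) / s ^ 2) s := by
  have h1 := (hasDerivAt_inv hs.ne').mul (aux_h0_deriv γ s hs)
  have h2 := (hasDerivAt_rpow_const (p := -γ) (Or.inl hs.ne')).div_const γ
  have h3 := h1.add h2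
  unfold gfun
  refine h3.congr_deriv ?_
  rw [rpow_sub hs, rpow_one]
  field_simp
  ring

lemma aux_g_cont (γ : ℝ) (hγ : 0 < γ) : ContinuousOn (gfun γ) (Set.Ioi 0) :=
  fun x hx => (aux_g_deriv γ x hγ hx).continuousAt.continuousWithinAt

lemma aux_g_pos (γ s : ℝ) (hγ : 0 < γ) (hs : 1 ≤ s) : 0 < gfun γ s := by
  have := aux_h0_nonneg γ s hs
  have hs0 : 0 < s := by linarith
  unfold gfun
  positivity

lemma aux_g_anti (γ : ℝ) (hγ : 0 < γ) : AntitoneOn (gfun γ) (Set.Ici 1) := by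
  apply antitoneOn_of_deriv_nonpos (convex_Ici 1)
  · exact (aux_g_cont γ hγ).mono fun x hx => Set.mem_Ioi.2 (lt_of_lt_of_le one_pos (Set.mem_Ici.1 hx))
  · intro x hx
    rw [interior_Ici] at hx
    exact (aux_g_deriv γ x hγ (one_pos.trans hx)).differentiableAt.differentiableWithinAt
  · intro x hx
    rw [interior_Ici] at hx
    rw [(aux_g_deriv γ x hγ (one_pos.trans hx)).deriv]
    have := aux_h0_nonneg γ x (le_of_lt hx)
    apply div_nonpos_of_nonpos_of_nonneg <;> [linarith; positivity]

/-- derivative of `s ^ γ * g s` -/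
lemma aux_k_deriv (γ s : ℝ) (hγ : 0 < γ) (hs : 1 ≤ s) :
    HasDerivAt (fun s => s ^ γ * gfun γ s) (s ^ (γ - 2)) s := by
  have hs0 : 0 < s := by linarith
  have h := (hasDerivAt_rpow_const (p := γ) (Or.inl hs0.ne')).mul (aux_g_deriv γ s hγ hs0)
  refine h.congr_deriv ?_
  rw [aux_h0_g γ s hγ hs, rpow_sub hs0, rpow_sub hs0, rpow_one, rpow_two]
  field_simp
  ring

lemma aux_k_mono (γ : ℝ) (hγ : 0 < γ) :
    MonotoneOn (fun s => s ^ γ * gfun γ s) (Set.Ici 1) := by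
  apply monotoneOn_of_deriv_nonneg (convex_Ici 1)
  · exact fun x hx => (aux_k_deriv γ x hγ hx).continuousAt.continuousWithinAt
  · intro x hx
    rw [interior_Ici] at hx
    exact (aux_k_deriv γ x hγ (le_of_lt hx)).differentiableAt.differentiableWithinAt
  · intro x hx
    rw [interior_Ici] at hx
    rw [(aux_k_deriv γ x hγ (le_of_lt hx)).deriv]
    exact rpow_nonneg (zero_le_one.trans (le_of_lt hx)) _

lemma aux_g_one (γ : ℝ) : gfun γ 1 = 1 / γ := by
  simp [gfun, h0]

lemma aux_k_log (γ s : ℝ) (hγ : 0 < γ) (hγ1 : γ ≤ 1) (hs : 1 ≤ s) :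
    s ^ γ * gfun γ s ≤ 1 / γ + log s := by
  have key : AntitoneOn (fun s => s ^ γ * gfun γ s - log s) (Set.Ici 1) := by
    have hd : ∀ x : ℝ, 1 ≤ x → HasDerivAt (fun s => s ^ γ * gfun γ s - log s)
        (x ^ (γ - 2) - x⁻¹) x := fun x hx =>
      (aux_k_deriv γ x hγ hx).sub (hasDerivAt_log (by linarith))
    apply antitoneOn_of_deriv_nonpos (convex_Ici 1)
    · exact fun x hx => (hd x hx).continuousAt.continuousWithinAt
    · intro x hx
      rw [interior_Ici] at hx
      exact (hd x (le_of_lt hx)).differentiableAt.differentiableWithinAt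
    · intro x hx
      rw [interior_Ici] at hx
      rw [(hd x (le_of_lt hx)).deriv, ← rpow_neg_one x]
      have := rpow_le_rpow_of_exponent_le (le_of_lt hx) (show γ - 2 ≤ -1 by linarith)
      linarith
  have := key (Set.self_mem_Ici) hs hs
  simp only [log_one, one_rpow, aux_g_one] at this
  linarith

lemma aux_k_bound (γ ε s : ℝ) (hγ : 0 < γ) (hγ1 : γ ≤ 1) (hε : 0 < ε) (hs : 1 ≤ s) :
    gfun γ s ≤ (1 / γ + 1 / ε) * s ^ (ε - γ) := by
  have hs0 : 0 < s := by linarith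
  have h1 := aux_k_log γ s hγ hγ1 hs
  have h2 := log_le_rpow_div hs0.le hε
  have h3 : 1 ≤ s ^ ε := one_le_rpow hs hε.le
  have h4 : s ^ γ * gfun γ s ≤ (1 / γ + 1 / ε) * s ^ ε := by
    have : 1 / γ * 1 ≤ 1 / γ * s ^ ε := by gcongr
    have e : s ^ ε / ε = 1 / ε * s ^ ε := by ring
    rw [e] at h2
    nlinarith
  rw [rpow_sub hs0, ← mul_div_assoc, le_div_iff₀ (rpow_pos_of_pos hs0 _)]
  linarith

lemma aux_pow_bound (γ : ℝ) (m : ℕ) (hγ : 0 < γ) (hγ1 : γ ≤ 1)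
    (hm : 1 < ((m : ℝ) + 2) * γ) : ∃ K : ℝ, ∀ s : ℝ, 1 ≤ s →
    s ^ (-γ) * gfun γ s ^ (m + 1) ≤ K * s ^ (-1 - (((m : ℝ) + 2) * γ - 1) / 2) := by
  set a := ((m : ℝ) + 2) * γ - 1 with ha
  have ha0 : 0 < a := by linarith
  set ε := a / 2 / ((m : ℝ) + 1) with hε
  have hε0 : 0 < ε := by positivity
  refine ⟨(1 / γ + 1 / ε) ^ (m + 1), fun s hs => ?_⟩
  have hs0 : 0 < s := by linarith
  have h1 := aux_k_bound γ ε s hγ hγ1 hε0 hs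
  have h2 := pow_le_pow_left₀ (aux_g_pos γ s hγ hs).le h1 (m + 1)
  calc s ^ (-γ) * gfun γ s ^ (m + 1)
      ≤ s ^ (-γ) * ((1 / γ + 1 / ε) * s ^ (ε - γ)) ^ (m + 1) := by gcongr
    _ = (1 / γ + 1 / ε) ^ (m + 1) * (s ^ (-γ) * (s ^ (ε - γ)) ^ (m + 1)) := by
        rw [mul_pow]; ring
    _ = _ := by
        congr 1
        rw [← rpow_natCast, ← rpow_mul hs0.le, ← rpow_add hs0]
        congr 1
        have : ε * ((m : ℝ) + 1) = a / 2 := by rw [hε]; field_simp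
        push_cast
        linear_combination this + ha

lemma aux_rpow_cont (p : ℝ) : ContinuousOn (fun s : ℝ => s ^ p) (Set.Ioi 0) :=
  fun x hx => (continuousAt_rpow_const x p (Or.inl (ne_of_gt hx))).continuousWithinAt

lemma aux_I_int (γ : ℝ) (m : ℕ) (hγ : 0 < γ) (hγ1 : γ ≤ 1)
    (hm : 1 < ((m : ℝ) + 2) * γ) :
    IntegrableOn (fun s => s ^ (-γ) * gfun γ s ^ (m + 1)) (Set.Ioi 1) := by
  obtain ⟨K, hK⟩ := aux_pow_bound γ m hγ hγ1 hm
  have hi : IntegrableOn (fun s : ℝ => K * s ^ (-1 - (((m : ℝ) + 2) * γ - 1) / 2)) (Set.Ioi 1) :=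
    (integrableOn_Ioi_rpow_of_lt (by linarith) one_pos).const_mul K
  refine Integrable.mono' hi ?_ ?_
  · apply ContinuousOn.aestronglyMeasurable _ measurableSet_Ioi
    apply ContinuousOn.mono _ (Set.Ioi_subset_Ioi zero_le_one)
    exact (aux_rpow_cont _).mul ((aux_g_cont γ hγ).pow _)
  · refine (ae_restrict_iff' measurableSet_Ioi).2 (ae_of_all _ fun s hs => ?_)
    have hs1 : 1 ≤ s := le_of_lt hs
    have := aux_g_pos γ s hγ hs1
    have hs0 : 0 < s := by linarith
    rw [norm_of_nonneg (by positivity)]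
    exact hK s hs1

lemma aux_J_int (γ : ℝ) (m : ℕ) (hγ : 0 < γ) :
    IntegrableOn (fun s => s ^ (-γ - 1) * gfun γ s ^ m) (Set.Ioi 1) := by
  have hi : IntegrableOn (fun s : ℝ => s ^ (-γ - 1) * (gfun γ 1) ^ m) (Set.Ioi 1) :=
    (integrableOn_Ioi_rpow_of_lt (by linarith) one_pos).mul_const _
  refine Integrable.mono' hi ?_ ?_
  · apply ContinuousOn.aestronglyMeasurable _ measurableSet_Ioi
    apply ContinuousOn.mono _ (Set.Ioi_subset_Ioi zero_le_one)
    exact (aux_rpow_cont _).mul ((aux_g_cont γ hγ).pow _)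
  · refine (ae_restrict_iff' measurableSet_Ioi).2 (ae_of_all _ fun s hs => ?_)
    have hs1 : 1 ≤ s := le_of_lt hs
    have hp := aux_g_pos γ s hγ hs1
    have hs0 : 0 < s := by linarith
    rw [norm_of_nonneg (by positivity)]
    have := aux_g_anti γ hγ Set.self_mem_Ici hs1 hs1
    gcongr

lemma aux_J_lower (γ t : ℝ) (m : ℕ) (hγ : 0 < γ) (ht : 1 ≤ t) :
    t ^ (-γ) * gfun γ t ^ m ≤
      ((m : ℝ) + 1) * γ * ∫ s in Set.Ioi t, s ^ (-γ - 1) * gfun γ s ^ m := by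
  have ht0 : 0 < t := by linarith
  have hlt : -γ - 1 - γ * m < -1 := by
    have : 0 ≤ γ * m := by positivity
    linarith
  have hle : ∫ s in Set.Ioi t, s ^ (-γ - 1 - γ * m) * (t ^ γ * gfun γ t) ^ m ≤
      ∫ s in Set.Ioi t, s ^ (-γ - 1) * gfun γ s ^ m := by
    apply setIntegral_mono_on
    · exact (integrableOn_Ioi_rpow_of_lt hlt ht0).mul_const _
    · exact (aux_J_int γ m hγ).mono_set (Set.Ioi_subset_Ioi ht)
    · exact measurableSet_Ioi
    · intro s hs
      have hts : t ≤ s := le_of_lt hs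
      have hs0 : 0 < s := by linarith
      have hk := aux_k_mono γ hγ (Set.mem_Ici.2 ht) (Set.mem_Ici.2 (ht.trans hts)) hts
      have hg := aux_g_pos γ t hγ ht
      simp only at hk
      have := pow_le_pow_left₀ (by positivity) hk m
      calc s ^ (-γ - 1 - γ * m) * (t ^ γ * gfun γ t) ^ m
          ≤ s ^ (-γ - 1 - γ * m) * (s ^ γ * gfun γ s) ^ m := by gcongr
        _ = _ := by
          rw [mul_pow, ← mul_assoc, ← rpow_natCast (s ^ γ), ← rpow_mul hs0.le, ← rpow_add hs0]
          congr 2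
          ring
  rw [integral_mul_const, integral_Ioi_rpow_of_lt hlt ht0] at hle
  refine le_trans (le_of_eq ?_) (mul_le_mul_of_nonneg_left hle (by positivity))
  rw [mul_pow, ← rpow_natCast (t ^ γ), ← rpow_mul ht0.le]
  have e : t ^ (-γ) = t ^ (-γ - 1 - γ * m + 1) * t ^ (γ * m) := by
    rw [← rpow_add ht0]; congr 1; ring
  rw [e]
  have e2 : -γ - 1 - γ * m + 1 = -(((m : ℝ) + 1) * γ) := by ring
  rw [e2]
  have : ((m : ℝ) + 1) ≠ 0 := by positivity
  field_simp

lemma aux_I_eq (γ t : ℝ) (m : ℕ) (hγ : 0 < γ) (hγ1 : γ ≤ 1) (ht : 1 ≤ t)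
    (hm : 1 < ((m : ℝ) + 2) * γ) :
    (((m : ℝ) + 2) * γ - 1) * ∫ s in Set.Ioi t, s ^ (-γ) * gfun γ s ^ (m + 1) =
      t ^ (1 - γ) * gfun γ t ^ (m + 1) +
      ((m : ℝ) + 1) * ∫ s in Set.Ioi t, s ^ (-γ - 1) * gfun γ s ^ m := by
  have hI := (aux_I_int γ m hγ hγ1 hm).mono_set (Set.Ioi_subset_Ioi ht)
  have hJ := (aux_J_int γ m hγ).mono_set (Set.Ioi_subset_Ioi ht)
  set a := ((m : ℝ) + 2) * γ - 1 with ha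
  have hd : ∀ x ∈ Set.Ici t, HasDerivAt (fun s => s ^ (1 - γ) * gfun γ s ^ (m + 1))
      (((m : ℝ) + 1) * (x ^ (-γ - 1) * gfun γ x ^ m) - a * (x ^ (-γ) * gfun γ x ^ (m + 1))) x := by
    intro x hx
    have hx1 : 1 ≤ x := ht.trans hx
    have hx0 : 0 < x := by linarith
    have h := (hasDerivAt_rpow_const (p := 1 - γ) (Or.inl hx0.ne')).mul
      ((aux_g_deriv γ x hγ hx0).pow (m + 1))
    refine h.congr_deriv ?_
    have e1 : 1 - γ - 1 = -γ := by ring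
    have e2 : x ^ (1 - γ) = x * x ^ (-γ) := by rw [sub_eq_add_neg, rpow_add hx0, rpow_one]
    rw [aux_h0_g γ x hγ hx1, rpow_sub hx0 (-γ) 1, e1, rpow_one]
    simp only [Pi.pow_apply]
    rw [e2, ha]
    push_cast
    field_simp
    ring
  have hlim : Filter.Tendsto (fun s => s ^ (1 - γ) * gfun γ s ^ (m + 1)) Filter.atTop
      (nhds 0) := by
    obtain ⟨K, hK⟩ := aux_pow_bound γ m hγ hγ1 hm
    have hz : Filter.Tendsto (fun s : ℝ => K * s ^ (-(a / 2))) Filter.atTop (nhds 0) := by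
      have := (tendsto_rpow_neg_atTop (show 0 < a / 2 by linarith)).const_mul K
      simpa using this
    refine tendsto_of_tendsto_of_tendsto_of_le_of_le' tendsto_const_nhds hz ?_ ?_
    · filter_upwards [Filter.eventually_ge_atTop 1] with s hs
      have := aux_g_pos γ s hγ hs
      have hs0 : 0 < s := by linarith
      positivity
    · filter_upwards [Filter.eventually_ge_atTop 1] with s hs
      have hs0 : 0 < s := by linarith
      have := mul_le_mul_of_nonneg_left (hK s hs) hs0.le
      have e2 : s ^ (1 - γ) = s * s ^ (-γ) := by rw [sub_eq_add_neg, rpow_add hs0, rpow_one]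
      have e3 : s ^ (-(a / 2)) = s * s ^ (-1 - a / 2) := by
        nth_rewrite 2 [← rpow_one s]
        rw [← rpow_add hs0]; congr 1; ring
      rw [e2, e3]
      linarith
  have := integral_Ioi_of_hasDerivAt_of_tendsto' hd
    ((hJ.const_mul _).sub (hI.const_mul _)) hlim
  rw [integral_sub (hJ.const_mul _) (hI.const_mul _), integral_const_mul,
    integral_const_mul] at this
  linarith

lemma aux_main (γ t : ℝ) (m : ℕ) (hγ : 0 < γ) (hγ1 : γ ≤ 1) (ht : 1 ≤ t)
    (hm : 1 < ((m : ℝ) + 2) * γ) :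
    t⁻¹ * ∫ s in Set.Ioi t, s ^ (-γ) * gfun γ s ^ (m + 1) ≤
     (2 * (m : ℝ) + 3) * γ * (((m : ℝ) + 2) * γ - 1)⁻¹ * gfun γ t *
       ∫ s in Set.Ioi t, s ^ (-γ - 1) * gfun γ s ^ m := by
  have h1 := aux_I_eq γ t m hγ hγ1 ht hm
  have h2 := aux_J_lower γ t m hγ ht
  have ht0 : 0 < t := by linarith
  have hg := aux_g_pos γ t hγ ht
  have hh := aux_h0_nonneg γ t ht
  rw [aux_h0_g γ t hγ ht] at hh
  have hJ : 0 ≤ ∫ s in Set.Ioi t, s ^ (-γ - 1) * gfun γ s ^ m := by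
    apply setIntegral_nonneg measurableSet_Ioi
    intro s hs
    have hs1 : 1 ≤ s := ht.trans (le_of_lt hs)
    have := aux_g_pos γ s hγ hs1
    have hs0 : 0 < s := by linarith
    positivity
  set J := ∫ s in Set.Ioi t, s ^ (-γ - 1) * gfun γ s ^ m
  set I := ∫ s in Set.Ioi t, s ^ (-γ) * gfun γ s ^ (m + 1)
  have ha : 0 < ((m : ℝ) + 2) * γ - 1 := by linarith
  set a := ((m : ℝ) + 2) * γ - 1
  have e2 : t ^ (1 - γ) = t * t ^ (-γ) := by rw [sub_eq_add_neg, rpow_add ht0, rpow_one]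
  rw [e2] at h1
  have h3 : a * I ≤ (2 * (m : ℝ) + 3) * γ * gfun γ t * J * t := by
    have p1 : t * gfun γ t * (t ^ (-γ) * gfun γ t ^ m) ≤
        t * gfun γ t * (((m : ℝ) + 1) * γ * J) := by gcongr
    have p2 : 0 ≤ ((m : ℝ) + 1) * J * (γ * t * gfun γ t - 1) := by positivity
    have p3 : 0 ≤ γ * gfun γ t * J * t := by positivity
    rw [h1, pow_succ]
    linarith
  rw [inv_mul_le_iff₀ ht0, ← mul_le_mul_iff_right₀ ha]
  refine h3.trans (le_of_eq ?_)
  field_simp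

lemma aux_hfun (γ t : ℝ) (hγ : 0 < γ) (ht : 1 ≤ t) : hfun γ t = gfun γ t := by
  have ht0 : 0 < t := by linarith
  have e1 : Set.EqOn (fun s : ℝ => s ^ (-γ) * (max t s)⁻¹) (fun s => s ^ (-γ) * t⁻¹)
      (Set.Ioc 1 t) := fun s hs => by simp only [max_eq_left hs.2]
  have e2 : Set.EqOn (fun s : ℝ => s ^ (-γ) * (max t s)⁻¹) (fun s => s ^ (-γ - 1))
      (Set.Ioi t) := fun s hs => by
    have hs' : t < s := hs
    simp only [max_eq_right hs'.le]
    rw [rpow_sub (ht0.trans hs'), rpow_one]; rfl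
  have i1 : IntegrableOn (fun s : ℝ => s ^ (-γ) * (max t s)⁻¹) (Set.Ioc 1 t) := by
    refine IntegrableOn.congr_fun ?_ e1.symm measurableSet_Ioc
    refine IntegrableOn.mono_set ?_ Set.Ioc_subset_Icc_self
    apply ContinuousOn.integrableOn_Icc
    apply ContinuousOn.mul _ continuousOn_const
    exact (aux_rpow_cont _).mono fun x hx => lt_of_lt_of_le one_pos hx.1
  have i2 : IntegrableOn (fun s : ℝ => s ^ (-γ) * (max t s)⁻¹) (Set.Ioi t) :=
    IntegrableOn.congr_fun (integrableOn_Ioi_rpow_of_lt (by linarith) ht0) e2.symm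
      measurableSet_Ioi
  unfold hfun
  rw [← Set.Ioc_union_Ioi_eq_Ioi ht, setIntegral_union (Set.Ioc_disjoint_Ioi le_rfl)
    measurableSet_Ioi i1 i2, setIntegral_congr_fun measurableSet_Ioc e1,
    setIntegral_congr_fun measurableSet_Ioi e2, integral_mul_const,
    integral_Ioi_rpow_of_lt (by linarith) ht0, ← intervalIntegral.integral_of_le ht]
  unfold gfun h0
  have : -γ - 1 + 1 = -γ := by ring
  rw [this, mul_comm, neg_div_neg_eq]

lemma aux_P_int (γ t : ℝ) (m : ℕ) (hγ : 0 < γ) (hγ1 : γ ≤ 1) (ht : 1 ≤ t)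
    (hm : 1 < ((m : ℝ) + 2) * γ) :
    IntegrableOn (fun s => s ^ (-γ) * hfun γ (max t s) * (hfun γ s) ^ m) (Set.Ioi 1) := by
  have e : Set.EqOn (fun s => s ^ (-γ) * gfun γ (max t s) * (gfun γ s) ^ m)
      (fun s => s ^ (-γ) * hfun γ (max t s) * (hfun γ s) ^ m) (Set.Ioi 1) := fun s hs => by
    simp only [aux_hfun γ s hγ (le_of_lt hs), aux_hfun γ (max t s) hγ (ht.trans (le_max_left _ _))]
  refine IntegrableOn.congr_fun ?_ e measurableSet_Ioi
  refine Integrable.mono' (aux_I_int γ m hγ hγ1 hm) ?_ ?_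
  · apply ContinuousOn.aestronglyMeasurable _ measurableSet_Ioi
    apply ContinuousOn.mono _ (Set.Ioi_subset_Ioi zero_le_one)
    refine ((aux_rpow_cont _).mul ?_).mul ((aux_g_cont γ hγ).pow _)
    refine (aux_g_cont γ hγ).comp (by fun_prop) ?_
    intro x hx
    exact lt_of_lt_of_le hx (le_max_right t x)
  · refine (ae_restrict_iff' measurableSet_Ioi).2 (ae_of_all _ fun s hs => ?_)
    have hs1 : 1 ≤ s := le_of_lt hs
    have hp := aux_g_pos γ s hγ hs1
    have hs0 : 0 < s := by linarith
    have hmx : 1 ≤ max t s := ht.trans (le_max_left _ _)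
    have hp' := aux_g_pos γ (max t s) hγ hmx
    rw [norm_of_nonneg (by positivity)]
    have := aux_g_anti γ hγ (Set.mem_Ici.2 hs1) (Set.mem_Ici.2 hmx) (le_max_right t s)
    rw [pow_succ, mul_assoc, mul_comm (gfun γ s ^ m)]
    gcongr

lemma aux_P_nonneg (γ t : ℝ) (m : ℕ) (hγ : 0 < γ) (ht : 1 ≤ t) (s : ℝ) (hs : 1 < s) :
    0 ≤ s ^ (-γ) * hfun γ (max t s) * (hfun γ s) ^ m := by
  have hmx : 1 ≤ max t s := ht.trans (le_max_left _ _)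
  rw [aux_hfun γ s hγ hs.le, aux_hfun γ _ hγ hmx]
  have := aux_g_pos γ s hγ hs.le
  have := aux_g_pos γ _ hγ hmx
  have hs0 : 0 < s := by linarith
  positivity

lemma aux_R (γ t : ℝ) (m : ℕ) (hγ : 0 < γ) (hγ1 : γ ≤ 1) (ht : 1 ≤ t)
    (hm : 1 < ((m : ℝ) + 2) * γ) : Rfun γ m t ≤ t⁻¹ * Pfun γ m t := by
  have ht0 : 0 < t := by linarith
  have e : ∫ s in Set.Ioi t, s ^ (-2 : ℝ) * Pfun γ m t = t⁻¹ * Pfun γ m t := by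
    rw [integral_mul_const, integral_Ioi_rpow_of_lt (by norm_num) ht0]
    congr 1
    have : (-2 : ℝ) + 1 = -1 := by norm_num
    rw [this, rpow_neg_one]; ring
  rw [← e]
  unfold Rfun
  apply integral_mono_of_nonneg
  · refine (ae_restrict_iff' measurableSet_Ioi).2 (ae_of_all _ fun s hs => ?_)
    have hs' : t < s := hs
    have : 0 ≤ Pfun γ m s := setIntegral_nonneg measurableSet_Ioi
      fun u hu => aux_P_nonneg γ s m hγ (by linarith) u hu
    have hs0 : 0 < s := by linarith
    simp only [Pi.zero_apply]
    positivity
  · exact (integrableOn_Ioi_rpow_of_lt (by norm_num) ht0).mul_const _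
  · refine (ae_restrict_iff' measurableSet_Ioi).2 (ae_of_all _ fun s hs => ?_)
    have hs' : t < s := hs
    have hs0 : 0 < s := by linarith
    have hs1 : 1 ≤ s := by linarith
    have : Pfun γ m s ≤ Pfun γ m t := by
      unfold Pfun
      apply setIntegral_mono_on (aux_P_int γ s m hγ hγ1 hs1 hm) (aux_P_int γ t m hγ hγ1 ht hm)
        measurableSet_Ioi
      intro u hu
      have hu1 : 1 ≤ u := le_of_lt hu
      have hu0 : 0 < u := by linarith
      have hx : 1 ≤ max t u := ht.trans (le_max_left _ _)
      have hy : 1 ≤ max s u := hs1.trans (le_max_left _ _)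
      rw [aux_hfun γ u hγ hu1, aux_hfun γ _ hγ hx, aux_hfun γ _ hγ hy]
      have := aux_g_pos γ u hγ hu1
      have := aux_g_anti γ hγ (Set.mem_Ici.2 hx) (Set.mem_Ici.2 hy) (max_le_max_right u hs'.le)
      gcongr
    simp only
    gcongr

theorem stmt_18 (γ t : ℝ) (hγ : 0 < γ) (hγ1 : γ ≤ 1) (ht : 1 ≤ t) (m : ℕ)
    (hm : 1 < ((m : ℝ) + 2) * γ) :
    Rfun γ m t ≤ (2 * (m : ℝ) + 3) * γ * (((m : ℝ) + 2) * γ - 1)⁻¹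
      * hfun γ t * Qfun γ m t := by
  refine (aux_R γ t m hγ hγ1 ht hm).trans ?_
  have ht0 : 0 < t := by linarith
  have hg := aux_g_pos γ t hγ ht
  have ha : 0 < ((m : ℝ) + 2) * γ - 1 := by linarith
  have hPi := aux_P_int γ t m hγ hγ1 ht hm
  have p1 : Set.EqOn (fun s => s ^ (-γ) * hfun γ (max t s) * (hfun γ s) ^ m)
      (fun s => gfun γ t * (s ^ (-γ) * gfun γ s ^ m)) (Set.Ioc 1 t) := fun s hs => by
    simp only [max_eq_left hs.2, aux_hfun γ t hγ ht, aux_hfun γ s hγ hs.1.le]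
    ring
  have p2 : Set.EqOn (fun s => s ^ (-γ) * hfun γ (max t s) * (hfun γ s) ^ m)
      (fun s => s ^ (-γ) * gfun γ s ^ (m + 1)) (Set.Ioi t) := fun s hs => by
    have hs' : t < s := hs
    simp only [max_eq_right hs'.le, aux_hfun γ s hγ (ht.trans hs'.le)]
    ring
  have q1 : Set.EqOn (fun s => s ^ (-γ) * (max t s)⁻¹ * (hfun γ s) ^ m)
      (fun s => t⁻¹ * (s ^ (-γ) * gfun γ s ^ m)) (Set.Ioc 1 t) := fun s hs => by
    simp only [max_eq_left hs.2, aux_hfun γ s hγ hs.1.le]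
    ring
  have q2 : Set.EqOn (fun s => s ^ (-γ) * (max t s)⁻¹ * (hfun γ s) ^ m)
      (fun s => s ^ (-γ - 1) * gfun γ s ^ m) (Set.Ioi t) := fun s hs => by
    have hs' : t < s := hs
    simp only [max_eq_right hs'.le, aux_hfun γ s hγ (ht.trans hs'.le)]
    rw [rpow_sub (ht0.trans hs'), rpow_one]; rfl
  have iN : IntegrableOn (fun s => s ^ (-γ) * gfun γ s ^ m) (Set.Ioc 1 t) := by
    refine IntegrableOn.mono_set ?_ Set.Ioc_subset_Icc_self
    apply ContinuousOn.integrableOn_Icc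
    exact ((aux_rpow_cont _).mul ((aux_g_cont γ hγ).pow _)).mono
      fun x hx => lt_of_lt_of_le one_pos hx.1
  have hP : Pfun γ m t = gfun γ t * (∫ s in Set.Ioc 1 t, s ^ (-γ) * gfun γ s ^ m) +
      ∫ s in Set.Ioi t, s ^ (-γ) * gfun γ s ^ (m + 1) := by
    unfold Pfun
    rw [← Set.Ioc_union_Ioi_eq_Ioi ht, setIntegral_union (Set.Ioc_disjoint_Ioi le_rfl)
      measurableSet_Ioi (hPi.mono_set Set.Ioc_subset_Ioi_self)
      (hPi.mono_set (Set.Ioi_subset_Ioi ht)), setIntegral_congr_fun measurableSet_Ioc p1,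
      setIntegral_congr_fun measurableSet_Ioi p2, integral_const_mul]
  have hQ : Qfun γ m t = t⁻¹ * (∫ s in Set.Ioc 1 t, s ^ (-γ) * gfun γ s ^ m) +
      ∫ s in Set.Ioi t, s ^ (-γ - 1) * gfun γ s ^ m := by
    unfold Qfun
    rw [← Set.Ioc_union_Ioi_eq_Ioi ht, setIntegral_union (Set.Ioc_disjoint_Ioi le_rfl)
      measurableSet_Ioi (IntegrableOn.congr_fun (iN.const_mul _) q1.symm measurableSet_Ioc)
      (IntegrableOn.congr_fun ((aux_J_int γ m hγ).mono_set (Set.Ioi_subset_Ioi ht)) q2.symm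
        measurableSet_Ioi), setIntegral_congr_fun measurableSet_Ioc q1,
      setIntegral_congr_fun measurableSet_Ioi q2, integral_const_mul]
  have hN : 0 ≤ ∫ s in Set.Ioc 1 t, s ^ (-γ) * gfun γ s ^ m := by
    apply setIntegral_nonneg measurableSet_Ioc
    intro s hs
    have := aux_g_pos γ s hγ hs.1.le
    have hs0 : 0 < s := by linarith [hs.1]
    positivity
  have hC : 1 ≤ (2 * (m : ℝ) + 3) * γ * (((m : ℝ) + 2) * γ - 1)⁻¹ := by
    rw [← div_eq_mul_inv, le_div_iff₀ ha]
    have : 0 ≤ (m : ℝ) * γ := by positivity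
    linarith
  have hmain := aux_main γ t m hγ hγ1 ht hm
  rw [hP, hQ, aux_hfun γ t hγ ht, mul_add, mul_add]
  refine add_le_add ?_ hmain
  have hz : 0 ≤ gfun γ t * (t⁻¹ * ∫ s in Set.Ioc 1 t, s ^ (-γ) * gfun γ s ^ m) := by positivity
  have := mul_le_mul_of_nonneg_right hC hz
  linarith
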